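/- arXiv:1708.03115 — 12 statements merged into one kernel-verified Lean document; each statement's English description precedes it below -/
import Mathlib

section
/- Let α > 0, β ∈ ℝ, a > 0, ξ > 0 and I + N > 0 be real numbers, and let w(s) = 1/(1 + exp(−α(a·s/(I+N) − β))) − ξ·a·s. Then there exists s ∈ ℝ at which the derivative of w vanishes if and only if ξ ≤ α/(4(I+N)) (Eq. (8) of the paper). -/
/-- There exists a power level at which the derivative of the payoff `w`
vanishes iff the price condition `ξ ≤ α/(4(I+N))` (Eq. (8)) holds. -/
theorem exists_critical_point_iff_price_bound
    (α β a ξ I N : ℝ) (hα : 0 < α) (ha : 0 < a) (hξ : 0 < ξ) (hIN : 0 < I + N)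
    (w : ℝ → ℝ)
    (hw : w = fun s => 1 / (1 + Real.exp (-(α * (a * s / (I + N) - β)))) - ξ * a * s) :
    (∃ s : ℝ, deriv w s = 0) ↔ ξ ≤ α / (4 * (I + N)) := by
  have hd : ∀ s, deriv w s = 0 ↔ α * Real.exp (-(α * (a * s / (I + N) - β)))
      = ξ * (I + N) * (1 + Real.exp (-(α * (a * s / (I + N) - β)))) ^ 2 := by
    intro s
    have h1 : HasDerivAt (fun s : ℝ => -(α * (a * s / (I + N) - β)))
        (-(α * (a * 1 / (I + N)))) s :=
      (((((hasDerivAt_id s).const_mul a).div_const (I + N)).sub_const β).const_mul α).neg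
    have hpos : 0 < 1 + Real.exp (-(α * (a * s / (I + N) - β))) := by positivity
    have h2 := ((h1.exp.const_add 1).fun_inv hpos.ne').sub ((hasDerivAt_id s).const_mul (ξ * a))
    have hw' : w = (fun i => (1 + Real.exp (-(α * (a * i / (I + N) - β))))⁻¹)
        - fun y => ξ * a * id y := by
      rw [hw]
      funext x
      simp
    rw [← hw'] at h2
    rw [h2.deriv]
    clear h2 hw' h1 hw
    generalize Real.exp (-(α * (a * s / (I + N) - β))) = E at *
    generalize I + N = M at *
    have e : -(E * -(α * (a * 1 / M))) / (1 + E) ^ 2 - ξ * a * 1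
        = a / (M * (1 + E) ^ 2) * (α * E - ξ * M * (1 + E) ^ 2) := by
      field_simp
    rw [e, mul_eq_zero, sub_eq_zero]
    have : a / (M * (1 + E) ^ 2) ≠ 0 := by positivity
    simp [this]
  simp only [hd]
  rw [le_div_iff₀ (by positivity)]
  constructor
  · rintro ⟨s, h⟩
    have hE := Real.exp_pos (-(α * (a * s / (I + N) - β)))
    generalize Real.exp (-(α * (a * s / (I + N) - β))) = E at *
    have : 0 < ξ * (I + N) := by positivity
    generalize I + N = M at *
    have h4 : ξ * M * (4 * E) ≤ ξ * M * (1 + E) ^ 2 := by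
      apply mul_le_mul_of_nonneg_left _ this.le
      nlinarith [sq_nonneg (E - 1)]
    refine le_of_mul_le_mul_right ?_ hE
    linarith
  · intro h
    generalize I + N = M at *
    have hk : 0 < ξ * M := by positivity
    obtain ⟨c, hc⟩ : ∃ c, c = α / (ξ * M) := ⟨_, rfl⟩
    have hα' : α = c * (ξ * M) := by rw [hc]; field_simp
    have hc4 : 4 ≤ c := by
      rw [hc, le_div_iff₀ hk]; linarith
    obtain ⟨r, hr⟩ : ∃ r, r = Real.sqrt ((c - 2) ^ 2 - 4) := ⟨_, rfl⟩
    have hr0 : 0 ≤ r := hr ▸ Real.sqrt_nonneg _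
    have hr2 : r ^ 2 = (c - 2) ^ 2 - 4 := by
      rw [hr, Real.sq_sqrt]; nlinarith
    have hE : 0 < (c - 2 + r) / 2 := by linarith
    refine ⟨M / a * (β - Real.log ((c - 2 + r) / 2) / α), ?_⟩
    have e : -(α * (a * (M / a * (β - Real.log ((c - 2 + r) / 2) / α)) / M - β))
        = Real.log ((c - 2 + r) / 2) := by
      field_simp
      ring
    rw [e, Real.exp_log hE, hα']
    linear_combination (-(ξ * M) / 4) * hr2
end

section
/- Let α > 0, β ∈ ℝ, a > 0, ξ > 0 and I + N > 0 be real numbers with 4ξ(I+N) ≤ α, and let w(s) = 1/(1 + exp(−α(a·s/(I+N) − β))) − ξ·a·s. Then the best-reply power s_br = −((I+N)/(α·a))·(log(α/(2ξ(I+N)) − 1 − √((1 − α/(2ξ(I+N)))² − 1)) − α·β) is a critical point of w, i.e., w is differentiable at s_br with derivative 0. -/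
/-- The best-reply power (Eq. (17)) is a critical point of the payoff `w`. -/
theorem bestReply_isCriticalPoint
    (α β a ξ I N : ℝ) (hα : 0 < α) (ha : 0 < a) (hξ : 0 < ξ) (hIN : 0 < I + N)
    (hcond : 4 * ξ * (I + N) ≤ α)
    (w : ℝ → ℝ)
    (hw : w = fun s => 1 / (1 + Real.exp (-(α * (a * s / (I + N) - β)))) - ξ * a * s)
    (sbr : ℝ)
    (hsbr : sbr = -((I + N) / (α * a)) *
      (Real.log (α / (2 * ξ * (I + N)) - 1 -
          Real.sqrt ((1 - α / (2 * ξ * (I + N))) ^ 2 - 1)) - α * β)) :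
    HasDerivAt w 0 sbr := by
  obtain ⟨K, hK⟩ : ∃ K, K = I + N := ⟨_, rfl⟩
  rw [← hK] at hIN hcond hw hsbr
  obtain ⟨c, hc⟩ : ∃ c, c = α / (2 * ξ * K) := ⟨_, rfl⟩
  rw [← hc] at hsbr
  have hc2 : 2 ≤ c := by
    rw [hc, le_div_iff₀ (by positivity)]; linarith
  have hcα : α = c * (2 * ξ * K) := by
    rw [hc]; field_simp
  have hd : 0 ≤ (1 - c) ^ 2 - 1 := by nlinarith
  obtain ⟨r, hr⟩ : ∃ r, r = Real.sqrt ((1 - c) ^ 2 - 1) := ⟨_, rfl⟩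
  have hr2 : r ^ 2 = (1 - c) ^ 2 - 1 := by rw [hr, Real.sq_sqrt hd]
  have hr0 : 0 ≤ r := by rw [hr]; exact Real.sqrt_nonneg _
  rw [← hr] at hsbr
  obtain ⟨X, hX⟩ : ∃ X, X = c - 1 - r := ⟨_, rfl⟩
  rw [← hX] at hsbr
  have hXpos : 0 < X := by rw [hX]; nlinarith
  have hXq : (1 + X) ^ 2 = 2 * c * X := by rw [hX]; nlinarith
  have hexp : Real.exp (-(α * (a * sbr / K - β))) = X := by
    have : -(α * (a * sbr / K - β)) = Real.log X := by
      rw [hsbr]; field_simp; ring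
    rw [this, Real.exp_log hXpos]
  have h1 : HasDerivAt (fun s : ℝ => -(α * (a * s / K - β))) (-(α * (a * 1 / K))) sbr :=
    (((((hasDerivAt_id sbr).const_mul a).div_const K).sub_const β).const_mul α).neg
  have h2 := (h1.exp.const_add 1)
  have h3 := (hasDerivAt_const sbr (1:ℝ)).div h2 (by positivity)
  have h4 := h3.sub ((hasDerivAt_id sbr).const_mul (ξ * a))
  rw [hw]
  refine h4.congr_deriv ?_
  rw [hexp, hXq, hcα]
  have : 0 < c := by linarith
  field_simp
  ring
end

section
/- Let α > 0, β > 0, a > 0, ξ > 0 and I + N > 0 be real numbers with 4ξ(I+N) ≤ α. Then the best-reply power s_br = −((I+N)/(α·a))·(log(α/(2ξ(I+N)) − 1 − √((1 − α/(2ξ(I+N)))² − 1)) − α·β) satisfies s_br ≥ β(I+N)/a > 0; in particular the best reply is strictly positive. -/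
/-- The best-reply power (Eq. (17)) is at least `β(I+N)/a`, which is
strictly positive; in particular the best reply is strictly positive. -/
theorem bestReply_pos
    (α β a ξ I N : ℝ) (hα : 0 < α) (hβ : 0 < β) (ha : 0 < a) (hξ : 0 < ξ)
    (hIN : 0 < I + N) (hcond : 4 * ξ * (I + N) ≤ α)
    (sbr : ℝ)
    (hsbr : sbr = -((I + N) / (α * a)) *
      (Real.log (α / (2 * ξ * (I + N)) - 1 -
          Real.sqrt ((1 - α / (2 * ξ * (I + N))) ^ 2 - 1)) - α * β)) :
    β * (I + N) / a ≤ sbr ∧ 0 < β * (I + N) / a := by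
  have hpos : 0 < β * (I + N) / a := by positivity
  refine ⟨?_, hpos⟩
  have hx : 2 ≤ α / (2 * ξ * (I + N)) := by
    rw [le_div_iff₀ (by positivity)]
    linarith
  generalize α / (2 * ξ * (I + N)) = x at hx hsbr
  have h1 : Real.sqrt ((1 - x) ^ 2 - 1) ≤ x - 1 := by
    apply Real.sqrt_le_iff.mpr
    constructor
    · linarith
    · nlinarith
  have h2 : x - 2 ≤ Real.sqrt ((1 - x) ^ 2 - 1) := by
    apply Real.le_sqrt_of_sq_le
    nlinarith
  have hlog : Real.log (x - 1 - Real.sqrt ((1 - x) ^ 2 - 1)) ≤ 0 :=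
    Real.log_nonpos (by linarith) (by linarith)
  generalize Real.log (x - 1 - Real.sqrt ((1 - x) ^ 2 - 1)) = L at hlog hsbr
  have hc : 0 < (I + N) / (α * a) := by positivity
  have he : β * (I + N) / a = (I + N) / (α * a) * (α * β) := by
    field_simp
  rw [hsbr, he]
  nlinarith [mul_nonneg hc.le (neg_nonneg.mpr hlog)]
end

section
/- Let α > 0, β ∈ ℝ, a > 0, ξ > 0 and I + N > 0 be real numbers with 4ξ(I+N) < α, and let w(s) = 1/(1 + exp(−α(a·s/(I+N) − β))) − ξ·a·s. Then s_br = −((I+N)/(α·a))·(log(α/(2ξ(I+N)) − 1 − √((1 − α/(2ξ(I+N)))² − 1)) − α·β) is a local maximum point of w. -/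
/-- The best-reply power (Eq. (17)) is a local maximum point of the payoff `w`. -/
theorem bestReply_isLocalMax
    (α β a ξ I N : ℝ) (hα : 0 < α) (ha : 0 < a) (hξ : 0 < ξ) (hIN : 0 < I + N)
    (hcond : 4 * ξ * (I + N) < α)
    (w : ℝ → ℝ)
    (hw : w = fun s => 1 / (1 + Real.exp (-(α * (a * s / (I + N) - β)))) - ξ * a * s)
    (sbr : ℝ)
    (hsbr : sbr = -((I + N) / (α * a)) *
      (Real.log (α / (2 * ξ * (I + N)) - 1 -
          Real.sqrt ((1 - α / (2 * ξ * (I + N))) ^ 2 - 1)) - α * β)) :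
    IsLocalMax w sbr := by
  obtain ⟨M, hM⟩ : ∃ M, M = I + N := ⟨_, rfl⟩
  rw [← hM] at hIN hcond hw hsbr
  obtain ⟨k, hk⟩ : ∃ k, k = α / (2 * ξ * M) - 1 := ⟨_, rfl⟩
  have hk1 : 1 < k := by
    have : 2 < α / (2 * ξ * M) := by
      rw [lt_div_iff₀ (by positivity)]; linarith
    linarith
  have hαk : α = 2 * ξ * M * (k + 1) := by
    rw [hk]; field_simp; ring
  obtain ⟨r, hr⟩ : ∃ r, r = Real.sqrt (k ^ 2 - 1) := ⟨_, rfl⟩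
  have hr2 : r ^ 2 = k ^ 2 - 1 := by
    rw [hr]; exact Real.sq_sqrt (by nlinarith)
  have hr0 : 0 < r := by
    rw [hr]; exact Real.sqrt_pos.mpr (by nlinarith)
  have hrk : r < k := by nlinarith
  have hs2 : sbr = -(M / (α * a)) * (Real.log (k - r) - α * β) := by
    rw [hsbr, hr, hk]
    congr 6
    ring
  set E : ℝ → ℝ := fun s => Real.exp (-(α * (a * s / M - β))) with hE
  have hEs : E sbr = k - r := by
    have : -(α * (a * sbr / M - β)) = Real.log (k - r) := by
      rw [hs2]; field_simp; ring
    simp only [hE]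
    rw [this, Real.exp_log (by linarith)]
  have hEc : Continuous E := by simp only [hE]; fun_prop
  have hEanti : ∀ x y, x < y → E y < E x := by
    intro x y hxy
    simp only [hE]
    apply Real.exp_lt_exp.mpr
    have h1 : a * x / M < a * y / M := by gcongr
    have h2 := mul_lt_mul_of_pos_left h1 hα
    linarith
  have hE0 : ∀ s, 0 < E s := fun s => Real.exp_pos _
  have hEd : ∀ s, HasDerivAt E (E s * (-(α * (a / M)))) s := by
    intro s
    have h1 : HasDerivAt (fun s => -(α * (a * s / M - β))) (-(α * (a / M))) s := by
      have := (((((hasDerivAt_id s).const_mul a).div_const M).sub_const β).const_mul α).neg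
      exact this.congr_deriv (by simp)
    exact h1.exp
  have hwd : ∀ s, HasDerivAt w (ξ * a * ((E s - (k - r)) * (k + r - E s)) / (1 + E s) ^ 2) s := by
    intro s
    have hp : 0 < 1 + E s := by linarith [hE0 s]
    have h1 := ((((hEd s).const_add 1).inv hp.ne').sub ((hasDerivAt_id s).const_mul (ξ * a)))
    have hw' : w = (fun s => 1 + E s)⁻¹ - (fun s => ξ * a * id s) := by
      rw [hw]; funext s; simp [hE]
    rw [hw']
    refine h1.congr_deriv ?_
    rw [hαk]
    field_simp
    linear_combination -hr2
  have hev : ∀ᶠ s in nhds sbr, E s < k + r :=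
    hEc.continuousAt.eventually_lt continuousAt_const (by rw [hEs]; linarith)
  refine isLocalMax_of_deriv (hwd sbr).continuousAt
    (Filter.Eventually.of_forall fun s => (hwd s).differentiableAt) ?_ ?_
  · filter_upwards [hev.filter_mono nhdsWithin_le_nhds, self_mem_nhdsWithin] with s hs hlt
    have h := hEanti s sbr hlt
    rw [hEs] at h
    rw [(hwd s).deriv]
    have h1 : 0 ≤ (E s - (k - r)) * (k + r - E s) :=
      mul_nonneg (by linarith) (by linarith)
    positivity
  · filter_upwards [self_mem_nhdsWithin] with s hlt
    have h := hEanti sbr s hlt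
    rw [hEs] at h
    rw [(hwd s).deriv]
    have h1 : (E s - (k - r)) * (k + r - E s) ≤ 0 :=
      mul_nonpos_of_nonpos_of_nonneg (by linarith) (by linarith)
    exact div_nonpos_of_nonpos_of_nonneg
      (mul_nonpos_of_nonneg_of_nonpos (by positivity) h1) (by positivity)
end

section
/- Let α > 0, β ∈ ℝ, a > 0, ξ > 0 and I + N > 0 be real numbers with 4ξ(I+N) < α, and let w(s) = 1/(1 + exp(−α(a·s/(I+N) − β))) − ξ·a·s. Then w is strictly decreasing (strictly antitone) on the half-line [s_br, ∞), where s_br = −((I+N)/(α·a))·(log(α/(2ξ(I+N)) − 1 − √((1 − α/(2ξ(I+N)))² − 1)) − α·β). -/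
/-- The payoff `w` is strictly decreasing on the half-line `[s_br, ∞)`. -/
theorem payoff_strictAntiOn_Ici_bestReply
    (α β a ξ I N : ℝ) (hα : 0 < α) (ha : 0 < a) (hξ : 0 < ξ) (hIN : 0 < I + N)
    (hcond : 4 * ξ * (I + N) < α)
    (w : ℝ → ℝ)
    (hw : w = fun s => 1 / (1 + Real.exp (-(α * (a * s / (I + N) - β)))) - ξ * a * s)
    (sbr : ℝ)
    (hsbr : sbr = -((I + N) / (α * a)) *
      (Real.log (α / (2 * ξ * (I + N)) - 1 -
          Real.sqrt ((1 - α / (2 * ξ * (I + N))) ^ 2 - 1)) - α * β)) :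
    StrictAntiOn w (Set.Ici sbr) := by
  obtain ⟨M, hM⟩ : ∃ M, M = I + N := ⟨_, rfl⟩
  rw [← hM] at hIN hcond hw hsbr
  obtain ⟨k, hk⟩ : ∃ k, k = α / (2 * ξ * M) := ⟨_, rfl⟩
  rw [← hk] at hsbr
  have hαk : α = k * (2 * ξ * M) := by rw [hk]; field_simp
  have hk2 : 2 < k := by
    rw [hk, lt_div_iff₀ (by positivity)]; linarith
  obtain ⟨q, hq⟩ : ∃ q, q = Real.sqrt ((1 - k) ^ 2 - 1) := ⟨_, rfl⟩
  rw [← hq] at hsbr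
  have hq0 : 0 ≤ q := hq ▸ Real.sqrt_nonneg _
  have hqq : q ^ 2 = (1 - k) ^ 2 - 1 := by
    rw [hq]; exact Real.sq_sqrt (by nlinarith)
  have hr : 0 < k - 1 - q := by nlinarith
  have hd : ∀ s, HasDerivAt w
      (-(Real.exp (-(α * (a * s / M - β))) * -(α * (a / M))) /
        (1 + Real.exp (-(α * (a * s / M - β)))) ^ 2 - ξ * a) s := by
    intro s
    have h1 : HasDerivAt (fun s : ℝ => -(α * (a * s / M - β))) (-(α * (a / M))) s := by
      have := (((((hasDerivAt_id s).const_mul a).div_const M).sub_const β).const_mul α).neg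
      rw [mul_one] at this
      exact this
    have h2 := (h1.exp.const_add 1).inv (by positivity)
    have h3 := h2.sub ((hasDerivAt_id s).const_mul (ξ * a))
    rw [mul_one] at h3
    have hw' : w = (fun x => 1 + Real.exp (-(α * (a * x / M - β))))⁻¹ - fun y => ξ * a * id y := by
      rw [hw]; funext t; simp
    rw [hw']
    exact h3
  apply strictAntiOn_of_deriv_neg (convex_Ici _)
  · exact fun s _ => (hd s).continuousAt.continuousWithinAt
  · intro s hs
    rw [interior_Ici, Set.mem_Ioi] at hs
    rw [(hd s).deriv]
    have hy : Real.exp (-(α * (a * s / M - β))) < k - 1 - q := by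
      rw [← Real.lt_log_iff_exp_lt hr]
      have e : Real.log (k - 1 - q) = -(α * (a * sbr / M - β)) := by
        rw [hsbr]; field_simp; ring
      rw [e]
      gcongr
    have hy0 := Real.exp_pos (-(α * (a * s / M - β)))
    generalize Real.exp (-(α * (a * s / M - β))) = y at hy hy0
    have key : 2 * k * y < (1 + y) ^ 2 := by nlinarith
    rw [sub_neg, div_lt_iff₀ (by positivity)]
    have : -(y * -(α * (a / M))) = ξ * a * (2 * k * y) := by
      rw [hαk]; field_simp
    rw [this]
    gcongr
end

section
/- Let α > 0, β ∈ ℝ, a > 0, ξ > 0 and I + N > 0 be real numbers with 4ξ(I+N) < α, and let w(s) = 1/(1 + exp(−α(a·s/(I+N) − β))) − ξ·a·s. Define s₋ = −((I+N)/(α·a))·(log(α/(2ξ(I+N)) − 1 + √((1 − α/(2ξ(I+N)))² − 1)) − α·β) and s_br = −((I+N)/(α·a))·(log(α/(2ξ(I+N)) − 1 − √((1 − α/(2ξ(I+N)))² − 1)) − α·β). Then w attains its maximum over the half-line [s₋, ∞) at s_br, i.e., w(s) ≤ w(s_br) for all s ∈ [s₋, ∞). -/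
lemma aux_deriv (c u : ℝ) : HasDerivAt (fun u : ℝ => 1 / (1 + Real.exp (-u)) - c * u)
    (Real.exp (-u) / (1 + Real.exp (-u)) ^ 2 - c) u := by
  have hp : 0 < 1 + Real.exp (-u) := by positivity
  have h1 : HasDerivAt (fun u : ℝ => 1 + Real.exp (-u)) (Real.exp (-u) * (-1)) u :=
    ((hasDerivAt_neg u).exp).const_add 1
  have h2 := (h1.inv hp.ne').sub ((hasDerivAt_id u).const_mul c)
  have e1 : (fun u : ℝ => 1 / (1 + Real.exp (-u)) - c * u) =
      ((fun u : ℝ => 1 + Real.exp (-u))⁻¹ - fun y => c * id y) := by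
    ext v; simp
  have e2 : Real.exp (-u) / (1 + Real.exp (-u)) ^ 2 - c =
      -(Real.exp (-u) * -1) / (1 + Real.exp (-u)) ^ 2 - c * 1 := by ring
  rw [e1, e2]
  exact h2

lemma aux_max (c x r u : ℝ) (hc : 0 < c) (hx : 1 < x) (hcx : c * (2 * x + 2) = 1)
    (hr : 0 ≤ r) (hr2 : r ^ 2 = x ^ 2 - 1) (hu : -Real.log (x + r) ≤ u) :
    1 / (1 + Real.exp (-u)) - c * u ≤
      1 / (1 + Real.exp (-(-Real.log (x - r)))) - c * (-Real.log (x - r)) := by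
  have hxr : 0 < x - r := by nlinarith
  have hxr' : 0 < x + r := by linarith
  have key : ∀ v : ℝ, Real.exp (-v) / (1 + Real.exp (-v)) ^ 2 - c =
      c * ((x + r - Real.exp (-v)) * (Real.exp (-v) - (x - r))) / (1 + Real.exp (-v)) ^ 2 := by
    intro v
    have hp : 0 < 1 + Real.exp (-v) := by positivity
    generalize Real.exp (-v) = y at *
    field_simp
    linear_combination (-y) * hcx - c * hr2
  have hd : Differentiable ℝ (fun u : ℝ => 1 / (1 + Real.exp (-u)) - c * u) :=
    fun v => (aux_deriv c v).differentiableAt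
  rcases le_total u (-Real.log (x - r)) with h | h
  · have hm : MonotoneOn (fun u : ℝ => 1 / (1 + Real.exp (-u)) - c * u)
        (Set.Icc (-Real.log (x + r)) (-Real.log (x - r))) := by
      apply monotoneOn_of_deriv_nonneg (convex_Icc _ _) hd.continuous.continuousOn
        hd.differentiableOn
      intro v hv
      rw [interior_Icc] at hv
      rw [(aux_deriv c v).deriv, key]
      have h1 : Real.exp (-v) ≤ x + r := by
        rw [← Real.le_log_iff_exp_le hxr']; linarith [hv.1]
      have h2 : x - r ≤ Real.exp (-v) := by
        rw [← Real.log_le_iff_le_exp hxr]; linarith [hv.2]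
      have := mul_nonneg (sub_nonneg.2 h1) (sub_nonneg.2 h2)
      positivity
    exact hm ⟨hu, h⟩ ⟨hu.trans h, le_rfl⟩ h
  · have hm : AntitoneOn (fun u : ℝ => 1 / (1 + Real.exp (-u)) - c * u)
        (Set.Ici (-Real.log (x - r))) := by
      apply antitoneOn_of_deriv_nonpos (convex_Ici _) hd.continuous.continuousOn
        hd.differentiableOn
      intro v hv
      rw [interior_Ici] at hv
      have hv' : -Real.log (x - r) < v := hv
      rw [(aux_deriv c v).deriv, key]
      have h2 : Real.exp (-v) ≤ x - r := by
        rw [← Real.le_log_iff_exp_le hxr]; linarith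
      have h1 : Real.exp (-v) ≤ x + r := by linarith
      have := mul_nonpos_of_nonneg_of_nonpos (sub_nonneg.2 h1) (sub_nonpos.2 h2)
      apply div_nonpos_of_nonpos_of_nonneg _ (by positivity)
      exact mul_nonpos_of_nonneg_of_nonpos hc.le this
    exact hm (Set.mem_Ici.2 le_rfl) h h

/-- On the half-line `[s₋, ∞)`, the payoff `w` attains its maximum at the
best reply `s_br`. -/
theorem payoff_max_on_Ici_lowerCritical
    (α β a ξ I N : ℝ) (hα : 0 < α) (ha : 0 < a) (hξ : 0 < ξ) (hIN : 0 < I + N)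
    (hcond : 4 * ξ * (I + N) < α)
    (w : ℝ → ℝ)
    (hw : w = fun s => 1 / (1 + Real.exp (-(α * (a * s / (I + N) - β)))) - ξ * a * s)
    (sminus sbr : ℝ)
    (hsminus : sminus = -((I + N) / (α * a)) *
      (Real.log (α / (2 * ξ * (I + N)) - 1 +
          Real.sqrt ((1 - α / (2 * ξ * (I + N))) ^ 2 - 1)) - α * β))
    (hsbr : sbr = -((I + N) / (α * a)) *
      (Real.log (α / (2 * ξ * (I + N)) - 1 -
          Real.sqrt ((1 - α / (2 * ξ * (I + N))) ^ 2 - 1)) - α * β)) :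
    ∀ s ∈ Set.Ici sminus, w s ≤ w sbr := by
  intro s hs
  have hs' : sminus ≤ s := hs
  generalize hM : I + N = M at *
  set x := α / (2 * ξ * M) - 1 with hxdef
  have hx : 1 < x := by
    have : 2 < α / (2 * ξ * M) := by
      rw [lt_div_iff₀ (by positivity)]; linarith
    linarith
  have hsq : (1 - α / (2 * ξ * M)) ^ 2 - 1 = x ^ 2 - 1 := by rw [hxdef]; ring
  rw [hsq] at hsminus hsbr
  have hu : ∀ L : ℝ, α * (a * (-(M / (α * a)) * (L - α * β)) / M - β) = -L := by
    intro L
    field_simp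
    ring
  have hmono : α * (a * sminus / M - β) ≤ α * (a * s / M - β) := by gcongr
  rw [hsminus, hu] at hmono
  have := aux_max (ξ * M / α) x (Real.sqrt (x ^ 2 - 1)) _ (by positivity) hx
    (by rw [hxdef]; field_simp; ring) (Real.sqrt_nonneg _)
    (Real.sq_sqrt (by nlinarith)) hmono
  rw [← hu (Real.log (x - Real.sqrt (x ^ 2 - 1))), ← hsbr] at this
  have e : ∀ t : ℝ, ξ * M / α * (α * (a * t / M - β)) = ξ * a * t - ξ * M * β := by
    intro t
    field_simp
  rw [e, e] at this
  subst hw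
  simp only
  linarith
end

section
/- Let α > 0, β ∈ ℝ, a > 0, ξ > 0, N ≥ 0 be real numbers and let S(I) = −((I+N)/(α·a))·(log(α/(2ξ(I+N)) − 1 − √((1 − α/(2ξ(I+N)))² − 1)) − α·β) be the best-reply power as a function of the interference I. Then for every I with I + N > 0 and 0 < 4ξ(I+N) < α, S is differentiable at I with derivative S′(I) = β/a − 1/(a·√(α(α − 4ξ(I+N)))) − (1/(α·a))·log(x − √(x² − 1)), where x = α/(2ξ(I+N)) − 1 (Eq. (19) of the paper). -/
/-- The best-reply power, as a function of the interference `I`, is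
differentiable with derivative given by Eq. (19) of the paper. -/
theorem bestReply_hasDerivAt_interference
    (α β a ξ N : ℝ) (hα : 0 < α) (ha : 0 < a) (hξ : 0 < ξ) (hN : 0 ≤ N)
    (S : ℝ → ℝ)
    (hS : S = fun I => -((I + N) / (α * a)) *
      (Real.log (α / (2 * ξ * (I + N)) - 1 -
          Real.sqrt ((1 - α / (2 * ξ * (I + N))) ^ 2 - 1)) - α * β)) :
    ∀ I : ℝ, 0 < I + N → 0 < 4 * ξ * (I + N) → 4 * ξ * (I + N) < α →
      HasDerivAt S
        (β / a - 1 / (a * Real.sqrt (α * (α - 4 * ξ * (I + N)))) -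
          (1 / (α * a)) *
            Real.log ((α / (2 * ξ * (I + N)) - 1) -
              Real.sqrt ((α / (2 * ξ * (I + N)) - 1) ^ 2 - 1))) I := by
  intro I ht _ h4
  obtain ⟨t, htI⟩ : ∃ t, t = I + N := ⟨_, rfl⟩
  rw [← htI] at ht h4
  have hR2 : 0 < α * (α - 4 * ξ * t) := mul_pos hα (by linarith)
  obtain ⟨R, hRdef⟩ : ∃ R, R = Real.sqrt (α * (α - 4 * ξ * t)) := ⟨_, rfl⟩
  have hR : 0 < R := by rw [hRdef]; exact Real.sqrt_pos.mpr hR2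
  have hRsq : R ^ 2 = α * (α - 4 * ξ * t) := by rw [hRdef]; exact Real.sq_sqrt hR2.le
  have hden : (0:ℝ) < 2 * ξ * t := by positivity
  obtain ⟨u, hu⟩ : ∃ u, u = α / (2 * ξ * t) := ⟨_, rfl⟩
  have hu2 : 2 < u := by
    rw [hu, lt_div_iff₀ hden]; linarith
  have hq : (1 - u) ^ 2 - 1 = (R / (2 * ξ * t)) ^ 2 := by
    rw [div_pow, hRsq, hu]; field_simp; ring
  have hq' : (u - 1) ^ 2 - 1 = (R / (2 * ξ * t)) ^ 2 := by rw [← hq]; ring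
  obtain ⟨s, hs⟩ : ∃ s, s = R / (2 * ξ * t) := ⟨_, rfl⟩
  have hs0 : 0 < s := by rw [hs]; positivity
  rw [← hs] at hq hq'
  have hsq : Real.sqrt ((1 - u) ^ 2 - 1) = s := by rw [hq]; exact Real.sqrt_sq hs0.le
  have hsq' : Real.sqrt ((u - 1) ^ 2 - 1) = s := by rw [hq']; exact Real.sqrt_sq hs0.le
  have hpos : 0 < u - 1 - s := by nlinarith
  have hlin : HasDerivAt (fun I : ℝ => I + N) 1 I := (hasDerivAt_id I).add_const N
  have hU : HasDerivAt (fun I : ℝ => α / (2 * ξ * (I + N))) (-(u / t)) I := by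
    have h := (hasDerivAt_const I α).fun_div (hlin.const_mul (2 * ξ))
      (by rw [← htI]; exact hden.ne')
    refine h.congr_deriv ?_
    rw [← htI, hu]; field_simp; ring
  have hQ : HasDerivAt (fun I : ℝ => (1 - α / (2 * ξ * (I + N))) ^ 2 - 1)
      (2 * (1 - u) * (u / t)) I := by
    have h := ((hU.const_sub 1).fun_pow 2).sub_const 1
    refine h.congr_deriv ?_
    rw [← htI, ← hu]; simp
  have hSq := hQ.sqrt (by rw [← htI, ← hu, hq]; positivity)
  rw [← htI, ← hu, hsq] at hSq
  have hL := ((hU.sub_const 1).fun_sub hSq).log (by rw [← htI, ← hu, hsq]; exact hpos.ne')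
  rw [← htI, ← hu, hsq] at hL
  have hF := ((hlin.div_const (α * a)).fun_neg).fun_mul (hL.sub_const (α * β))
  rw [hS]
  refine hF.congr_deriv ?_
  rw [← htI, ← hu, hsq, hsq', ← hRdef]
  have hd : (-(u / t) - 2 * (1 - u) * (u / t) / (2 * s)) / (u - 1 - s) = u / (t * s) := by
    field_simp; ring
  have hus : u / (t * s) = α / (t * R) := by
    rw [hu, hs]; field_simp
  rw [hd, hus]
  field_simp
  ring
end

section
/- Let α > 0, β ∈ ℝ, a > 0, ξ > 0 and I + N > 0 be real numbers with 0 < 4ξ(I+N) < α, and let s_br = −((I+N)/(α·a))·(log(α/(2ξ(I+N)) − 1 − √((1 − α/(2ξ(I+N)))² − 1)) − α·β). Then the sigmoid utility evaluated at the best reply satisfies 1/(1 + exp(−α(a·s_br/(I+N) − β))) = (α + √(α² − 4αξ(I+N)))/(2α), which equals 2ξ(I+N)/(α − √(α² − 4αξ(I+N))) (Eq. (21) of the paper). -/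
/-- The sigmoid utility evaluated at the best-reply power equals
`(α + √(α² − 4αξ(I+N)))/(2α)`, which equals `2ξ(I+N)/(α − √(α² − 4αξ(I+N)))`
(Eq. (21) of the paper). -/
theorem sigmoid_at_bestReply
    (α β a ξ I N : ℝ) (hα : 0 < α) (ha : 0 < a) (hξ : 0 < ξ) (hIN : 0 < I + N)
    (h0 : 0 < 4 * ξ * (I + N)) (hcond : 4 * ξ * (I + N) < α)
    (sbr : ℝ)
    (hsbr : sbr = -((I + N) / (α * a)) *
      (Real.log (α / (2 * ξ * (I + N)) - 1 -
          Real.sqrt ((1 - α / (2 * ξ * (I + N))) ^ 2 - 1)) - α * β)) :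
    1 / (1 + Real.exp (-(α * (a * sbr / (I + N) - β)))) =
        (α + Real.sqrt (α ^ 2 - 4 * α * ξ * (I + N))) / (2 * α) ∧
      (α + Real.sqrt (α ^ 2 - 4 * α * ξ * (I + N))) / (2 * α) =
        2 * ξ * (I + N) / (α - Real.sqrt (α ^ 2 - 4 * α * ξ * (I + N))) := by
  have hc : 0 < ξ * (I + N) := mul_pos hξ hIN
  generalize hM : I + N = M at *
  have hD : 0 ≤ α ^ 2 - 4 * α * ξ * M := by nlinarith
  have hR0 : 0 ≤ Real.sqrt (α ^ 2 - 4 * α * ξ * M) := Real.sqrt_nonneg _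
  have hR2 := Real.sq_sqrt hD
  have hS : Real.sqrt ((1 - α / (2 * ξ * M)) ^ 2 - 1)
      = Real.sqrt (α ^ 2 - 4 * α * ξ * M) / (2 * ξ * M) := by
    have h1 : (1 - α / (2 * ξ * M)) ^ 2 - 1
        = (α ^ 2 - 4 * α * ξ * M) / (2 * ξ * M) ^ 2 := by
      field_simp
      ring
    rw [h1, Real.sqrt_div hD, Real.sqrt_sq (by linarith)]
  rw [hS] at hsbr
  generalize Real.sqrt (α ^ 2 - 4 * α * ξ * M) = R at *
  have hlt : R < α - 2 * (ξ * M) := by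
    apply lt_of_pow_lt_pow_left₀ 2 (by linarith)
    nlinarith [mul_pos hc hc]
  have hx : α / (2 * ξ * M) - 1 - R / (2 * ξ * M) = (α - 2 * (ξ * M) - R) / (2 * ξ * M) := by
    field_simp
  have hxpos : 0 < (α - 2 * (ξ * M) - R) / (2 * ξ * M) :=
    div_pos (by linarith) (by linarith)
  have hne : α - R ≠ 0 := ne_of_gt (by linarith)
  have h2 : (α + R) / (2 * α) = 2 * ξ * M / (α - R) := by
    rw [div_eq_div_iff (by positivity) hne]
    linear_combination -hR2
  refine ⟨?_, h2⟩
  rw [h2]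
  rw [hx] at hsbr
  have he : -(α * (a * sbr / M - β)) = Real.log ((α - 2 * (ξ * M) - R) / (2 * ξ * M)) := by
    rw [hsbr]
    field_simp
    ring
  rw [he, Real.exp_log hxpos]
  have h3 : 1 + (α - 2 * (ξ * M) - R) / (2 * ξ * M) = (α - R) / (2 * ξ * M) := by
    field_simp
    ring
  rw [h3, one_div_div]
end

section
/- Let α > 0, β > 0, a > 0, ξ > 0, N ≥ 0 be real numbers, and let S(I) = −((I+N)/(α·a))·(log(α/(2ξ(I+N)) − 1 − √((1 − α/(2ξ(I+N)))² − 1)) − α·β) be the best-reply power. Then the best-reply payoff I ↦ 1/(1 + exp(−α(a·S(I)/(I+N) − β))) − ξ·a·S(I) is strictly decreasing (strictly antitone) on the set of I with I + N > 0 and 0 < 4ξ(I+N) < α. -/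
lemma aux_anti (c : ℝ) (hc : 0 < c) :
    StrictAntiOn (fun u : ℝ => 1 / (1 + u) - u / (1 + u) ^ 2 * (c - Real.log u)) (Set.Ioo 0 1) := by
  have hd : ∀ u ∈ Set.Ioo (0:ℝ) 1,
      HasDerivAt (fun u : ℝ => 1 / (1 + u) - u / (1 + u) ^ 2 * (c - Real.log u))
        ((1 - u) / (1 + u) ^ 3 * (Real.log u - c)) u := by
    rintro u ⟨h0, h1⟩
    have hne : 1 + u ≠ 0 := by positivity
    have h1u : HasDerivAt (fun u : ℝ => 1 + u) 1 u := (hasDerivAt_id u).const_add 1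
    have hA := (hasDerivAt_const u (1:ℝ)).fun_div h1u hne
    have hB := (hasDerivAt_id' u).fun_div (h1u.fun_pow 2) (pow_ne_zero 2 hne)
    have hC := (Real.hasDerivAt_log h0.ne').const_sub c
    refine (hA.fun_sub (hB.fun_mul hC)).congr_deriv ?_
    have := h0.ne'
    field_simp
    ring
  apply strictAntiOn_of_deriv_neg (convex_Ioo 0 1)
  · intro u hu
    exact (hd u hu).continuousAt.continuousWithinAt
  · intro u hu
    rw [interior_Ioo] at hu
    rw [(hd u hu).deriv]
    obtain ⟨h0, h1⟩ := hu
    have hl := Real.log_neg h0 h1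
    have h2 : 0 < 1 - u := by linarith
    exact mul_neg_of_pos_of_neg (by positivity) (by linarith)

lemma aux_u (k : ℝ) (hk : 2 < k) :
    let u := k - 1 - Real.sqrt ((1 - k) ^ 2 - 1)
    0 < u ∧ u < 1 ∧ (1 + u) ^ 2 = 2 * k * u := by
  intro u
  have h0 : 0 ≤ (1 - k) ^ 2 - 1 := by nlinarith
  have hs := Real.sq_sqrt h0
  have hn := Real.sqrt_nonneg ((1 - k) ^ 2 - 1)
  have hu : u = k - 1 - Real.sqrt ((1 - k) ^ 2 - 1) := rfl
  generalize Real.sqrt ((1 - k) ^ 2 - 1) = s at *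
  refine ⟨?_, ?_, ?_⟩
  · rw [hu]; nlinarith
  · rw [hu]; nlinarith
  · rw [hu]; nlinarith

/-- The payoff obtained when playing the best reply is strictly decreasing in
the interference `I` on the admissible region. -/
theorem bestReply_payoff_strictAnti
    (α β a ξ N : ℝ) (hα : 0 < α) (hβ : 0 < β) (ha : 0 < a) (hξ : 0 < ξ) (hN : 0 ≤ N)
    (S : ℝ → ℝ)
    (hS : S = fun I => -((I + N) / (α * a)) *
      (Real.log (α / (2 * ξ * (I + N)) - 1 -
          Real.sqrt ((1 - α / (2 * ξ * (I + N))) ^ 2 - 1)) - α * β)) :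
    StrictAntiOn
      (fun I : ℝ =>
        1 / (1 + Real.exp (-(α * (a * S I / (I + N) - β)))) - ξ * a * S I)
      {I : ℝ | 0 < I + N ∧ 0 < 4 * ξ * (I + N) ∧ 4 * ξ * (I + N) < α} := by
  have key : ∀ I ∈ {I : ℝ | 0 < I + N ∧ 0 < 4 * ξ * (I + N) ∧ 4 * ξ * (I + N) < α},
      ∃ u ∈ Set.Ioo (0:ℝ) 1, ξ * (I + N) = α * (u / (1 + u) ^ 2) ∧
        1 / (1 + Real.exp (-(α * (a * S I / (I + N) - β)))) - ξ * a * S I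
          = 1 / (1 + u) - u / (1 + u) ^ 2 * (α * β - Real.log u) := by
    rintro I ⟨hx, -, hlt⟩
    have hk : 2 < α / (2 * ξ * (I + N)) := by
      rw [lt_div_iff₀ (by positivity)]; linarith
    have h := aux_u _ hk
    simp only [hS]
    generalize I + N = x at *
    simp only at h
    generalize α / (2 * ξ * x) - 1 - Real.sqrt ((1 - α / (2 * ξ * x)) ^ 2 - 1) = u at *
    obtain ⟨h0, h1, h2⟩ := h
    have hxu : ξ * x = α * (u / (1 + u) ^ 2) := by
      rw [h2]; field_simp
    refine ⟨u, ⟨h0, h1⟩, hxu, ?_⟩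
    have e1 : -(α * (a * (-(x / (α * a)) * (Real.log u - α * β)) / x - β)) = Real.log u := by
      field_simp; ring
    have e2 : ξ * a * (-(x / (α * a)) * (Real.log u - α * β))
        = (ξ * x) / α * (α * β - Real.log u) := by
      field_simp; ring
    rw [e1, e2, Real.exp_log h0, hxu, mul_div_cancel_left₀ _ hα.ne']
  intro I hI J hJ hIJ
  obtain ⟨u, hu, hu1, hu2⟩ := key I hI
  obtain ⟨v, hv, hv1, hv2⟩ := key J hJ
  simp only [hu2, hv2]
  refine aux_anti (α * β) (by positivity) hu hv ?_
  by_contra! hvu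
  have hlt : α * (u / (1 + u) ^ 2) < α * (v / (1 + v) ^ 2) := by
    rw [← hu1, ← hv1]
    exact mul_lt_mul_of_pos_left (by linarith) hξ
  have hlt2 := lt_of_mul_lt_mul_left hlt hα.le
  obtain ⟨hu0, hu1'⟩ := hu
  obtain ⟨hv0, hv1'⟩ := hv
  rw [div_lt_div_iff₀ (by positivity) (by positivity)] at hlt2
  have huv : u * v < 1 := by nlinarith
  nlinarith [mul_nonneg (sub_nonneg.2 hvu) (sub_nonneg.2 huv.le)]
end

section
/- Let α > 0, a > 0 and β ∈ ℝ be real numbers, and define D(t) = β/a − 1/(a·√(α(α − 4t))) − (1/(α·a))·log(α/(2t) − 1 − √((α/(2t) − 1)² − 1)) for t ∈ (0, α/4). Then D(t) → +∞ as t → 0 from the right (Tendsto along nhdsWithin 0 (0, ∞) to atTop). -/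
open Filter

theorem aux_log (x : ℝ) (hx : 1 ≤ x) :
    Real.log x ≤ - Real.log (x - Real.sqrt (x ^ 2 - 1)) := by
  have h0 : 0 ≤ x ^ 2 - 1 := by nlinarith
  have hs := Real.sq_sqrt h0
  have hn := Real.sqrt_nonneg (x ^ 2 - 1)
  have h : x - Real.sqrt (x ^ 2 - 1) = (x + Real.sqrt (x ^ 2 - 1))⁻¹ := by
    apply eq_inv_of_mul_eq_one_left
    nlinarith
  rw [h, Real.log_inv, neg_neg]
  exact Real.log_le_log (by linarith) (by linarith)

/-- The derivative of the best-reply power with respect to interference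
(Eq. (19)), as a function of `t = ξ(I+N)`, tends to `+∞` as `t → 0⁺`. -/
theorem bestReply_deriv_tendsto_atTop_at_zero
    (α a β : ℝ) (hα : 0 < α) (ha : 0 < a)
    (D : ℝ → ℝ)
    (hD : D = fun t => β / a - 1 / (a * Real.sqrt (α * (α - 4 * t))) -
      (1 / (α * a)) *
        Real.log (α / (2 * t) - 1 - Real.sqrt ((α / (2 * t) - 1) ^ 2 - 1))) :
    Tendsto D (nhdsWithin 0 (Set.Ioi 0)) atTop := by
  have hx : Tendsto (fun t : ℝ => α / (2 * t) - 1) (nhdsWithin 0 (Set.Ioi 0)) atTop := by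
    have h1 : Tendsto (fun t : ℝ => α / 2 * t⁻¹) (nhdsWithin 0 (Set.Ioi 0)) atTop :=
      tendsto_inv_nhdsGT_zero.const_mul_atTop (by positivity)
    have h2 := tendsto_atTop_add_const_right _ (-1) h1
    refine h2.congr fun t => ?_
    rw [← div_eq_mul_inv, div_div, sub_eq_add_neg]
  have hk : 0 < 1 / (α * a) := by positivity
  have hlog : Tendsto (fun t : ℝ => (1 / (α * a)) * Real.log (α / (2 * t) - 1))
      (nhdsWithin 0 (Set.Ioi 0)) atTop :=
    (Real.tendsto_log_atTop.comp hx).const_mul_atTop hk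
  have hc : ContinuousAt (fun t : ℝ => β / a - 1 / (a * Real.sqrt (α * (α - 4 * t)))) 0 := by
    have : a * Real.sqrt (α * (α - 4 * 0)) ≠ 0 := by
      have : 0 < α * (α - 4 * 0) := by simp; positivity
      positivity
    fun_prop (disch := assumption)
  have hc' := hc.tendsto.mono_left (nhdsWithin_le_nhds (s := Set.Ioi 0))
  refine tendsto_atTop_mono' _ ?_ (hc'.add_atTop hlog)
  filter_upwards [hx.eventually_ge_atTop 1] with t ht
  have := mul_le_mul_of_nonneg_left (aux_log _ ht) hk.le
  rw [hD]
  simp only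
  linarith
end

section
/- Let α > 0, a > 0 and β ∈ ℝ be real numbers, and define D(t) = β/a − 1/(a·√(α(α − 4t))) − (1/(α·a))·log(α/(2t) − 1 − √((α/(2t) − 1)² − 1)) for t ∈ (0, α/4). Then D(t) → −∞ as t → α/4 from the left (Tendsto along nhdsWithin (α/4) (−∞, α/4) to atBot). -/
open Filter

/-- The derivative of the best-reply power with respect to interference
(Eq. (19)), as a function of `t = ξ(I+N)`, tends to `−∞` as `t → (α/4)⁻`. -/
theorem bestReply_deriv_tendsto_atBot_at_quarter
    (α a β : ℝ) (hα : 0 < α) (ha : 0 < a)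
    (D : ℝ → ℝ)
    (hD : D = fun t => β / a - 1 / (a * Real.sqrt (α * (α - 4 * t))) -
      (1 / (α * a)) *
        Real.log (α / (2 * t) - 1 - Real.sqrt ((α / (2 * t) - 1) ^ 2 - 1))) :
    Tendsto D (nhdsWithin (α / 4) (Set.Iio (α / 4))) atBot := by
  have hc : ContinuousAt (fun t : ℝ => β / a - (1 / (α * a)) *
        Real.log (α / (2 * t) - 1 - Real.sqrt ((α / (2 * t) - 1) ^ 2 - 1))) (α / 4) := by
    have h2 : (2 * (α / 4)) ≠ 0 := by positivity
    have hv : α / (2 * (α / 4)) = 2 := by field_simp; norm_num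
    have h1 : ContinuousAt (fun t : ℝ => α / (2 * t)) (α / 4) :=
      ContinuousAt.div (by fun_prop) (by fun_prop) h2
    refine continuousAt_const.sub (continuousAt_const.mul (ContinuousAt.log ?_ ?_))
    · exact (h1.sub continuousAt_const).sub
        (((h1.sub continuousAt_const).pow 2).sub continuousAt_const).sqrt
    · rw [hv]; norm_num
  have hs : Tendsto (fun t : ℝ => a * Real.sqrt (α * (α - 4 * t)))
      (nhdsWithin (α / 4) (Set.Iio (α / 4))) (nhdsWithin 0 (Set.Ioi 0)) := by
    refine tendsto_nhdsWithin_iff.2 ⟨?_, ?_⟩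
    · have h : Continuous (fun t : ℝ => a * Real.sqrt (α * (α - 4 * t))) := by fun_prop
      have h' := h.tendsto (α / 4)
      have e : a * Real.sqrt (α * (α - 4 * (α / 4))) = 0 := by
        rw [show α * (α - 4 * (α / 4)) = 0 by ring]; simp
      rw [e] at h'
      exact h'.mono_left nhdsWithin_le_nhds
    · filter_upwards [self_mem_nhdsWithin] with t ht
      have ht' : t < α / 4 := ht
      exact mul_pos ha (Real.sqrt_pos.2 (mul_pos hα (by linarith)))
  have hi := tendsto_neg_atTop_atBot.comp (tendsto_inv_nhdsGT_zero.comp hs)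
  have := hi.atBot_add (hc.tendsto.mono_left nhdsWithin_le_nhds)
  rw [hD]
  refine this.congr fun t => ?_
  simp only [Function.comp, one_div]
  ring
end

section
/- Let α > 0, a > 0 and β ∈ ℝ be real numbers, and define D(t) = β/a − 1/(a·√(α(α − 4t))) − (1/(α·a))·log(α/(2t) − 1 − √((α/(2t) − 1)² − 1)) for t ∈ (0, α/4). Then there exists t ∈ (0, α/4) with D(t) = 0; that is, the derivative of the best-reply power with respect to interference, which is positive for small interference and negative near the maximal admissible interference, vanishes at some intermediate interference level. -/
/-- The derivative of the best-reply power with respect to interference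
(Eq. (19)), as a function of `t = ξ(I+N)`, vanishes at some `t ∈ (0, α/4)`. -/
theorem bestReply_deriv_exists_zero
    (α a β : ℝ) (hα : 0 < α) (ha : 0 < a)
    (D : ℝ → ℝ)
    (hD : D = fun t => β / a - 1 / (a * Real.sqrt (α * (α - 4 * t))) -
      (1 / (α * a)) *
        Real.log (α / (2 * t) - 1 - Real.sqrt ((α / (2 * t) - 1) ^ 2 - 1))) :
    ∃ t ∈ Set.Ioo 0 (α / 4), D t = 0 := by
  obtain ⟨v, hv0, hv⟩ : ∃ v : ℝ, 0 < v ∧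
      (α * β + 2 * v) * Real.sinh v - Real.cosh v = 0 := by
    set w : ℝ := 1 + |α * β| with hw
    have hw1 : 1 ≤ w := by have := abs_nonneg (α * β); linarith
    have hcont : Continuous (fun v : ℝ => (α * β + 2 * v) * Real.sinh v - Real.cosh v) := by
      have h1 := Real.continuous_sinh
      have h2 := Real.continuous_cosh
      fun_prop
    have hs : 0 < Real.sinh w := Real.sinh_pos_iff.2 (by linarith)
    have h2 : 2 ≤ α * β + 2 * w := by
      have := neg_abs_le (α * β); have := abs_nonneg (α * β); linarith
    have hc : Real.cosh w ≤ 2 * Real.sinh w := by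
      rw [Real.cosh_eq, Real.sinh_eq]
      have e1 := Real.add_one_le_exp (2 * w)
      have e2 : Real.exp w = Real.exp (2 * w) * Real.exp (-w) := by
        rw [← Real.exp_add]; congr 1; ring
      have e3 := Real.exp_pos (-w)
      nlinarith
    have := intermediate_value_Icc (a := 0) (b := w) (by linarith) hcont.continuousOn
    obtain ⟨v, hvm, hv⟩ := this (show (0 : ℝ) ∈ _ from ⟨by simp, by
      show 0 ≤ (α * β + 2 * w) * Real.sinh w - Real.cosh w
      nlinarith⟩)
    refine ⟨v, lt_of_le_of_ne hvm.1 ?_, hv⟩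
    rintro rfl
    simp at hv
  have hs : 0 < Real.sinh v := Real.sinh_pos_iff.2 hv0
  have hc : 0 < Real.cosh v := Real.cosh_pos v
  have hcs := Real.cosh_sq v
  have hexp : Real.cosh v - Real.sinh v = Real.exp (-v) := Real.cosh_sub_sinh v
  set s := Real.sinh v
  set c := Real.cosh v
  refine ⟨α / (4 * c ^ 2), ⟨by positivity, ?_⟩, ?_⟩
  · apply div_lt_div_of_pos_left hα (by norm_num)
    nlinarith [pow_pos hs 2]
  have h1 : α / (2 * (α / (4 * c ^ 2))) = 2 * c ^ 2 := by field_simp; norm_num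
  have h2 : Real.sqrt ((2 * c ^ 2 - 1) ^ 2 - 1) = 2 * s * c := by
    rw [show (2 * c ^ 2 - 1) ^ 2 - 1 = (2 * s * c) ^ 2 by
      have : s ^ 2 = c ^ 2 - 1 := by linarith
      rw [mul_pow, mul_pow, this]; ring]
    exact Real.sqrt_sq (by positivity)
  have h3 : Real.sqrt (α * (α - 4 * (α / (4 * c ^ 2)))) = α * s / c := by
    rw [show α * (α - 4 * (α / (4 * c ^ 2))) = (α * s / c) ^ 2 by
      have : s ^ 2 = c ^ 2 - 1 := by linarith
      rw [div_pow, mul_pow, this]; field_simp]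
    exact Real.sqrt_sq (by positivity)
  have h4 : Real.log (2 * c ^ 2 - 1 - 2 * s * c) = -(2 * v) := by
    rw [show 2 * c ^ 2 - 1 - 2 * s * c = (c - s) ^ 2 by nlinarith, hexp, Real.log_pow,
      Real.log_exp]
    push_cast; ring
  rw [hD]
  simp only
  rw [h1, h2, h3, h4]
  field_simp
  linarith
end
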